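/- arXiv:1802.02876 — 3 statements merged into one kernel-verified Lean document; each statement's English description precedes it below -/
import Mathlib

section
/- Let F : [0,∞)² → [0,∞) satisfy: (grounded) F(u,0) = F(0,v) = 0 for all u, v ≥ 0; (2-increasing) F(u₂,v₂) − F(u₁,v₂) − F(u₂,v₁) + F(u₁,v₁) ≥ 0 whenever u₁ ≤ u₂ and v₁ ≤ v₂; (uniform margin) F(u,v) → v as u → ∞, for every v ≥ 0. Assume that for all u, v ≥ 0 the partial derivative D(u,v) = ∂F(u,v)/∂v exists. Then for every fixed v ≥ 0: (i) the function u ↦ D(u,v) is nondecreasing on [0,∞); (ii) 0 ≤ D(u,v) ≤ 1 for all u ≥ 0; (iii) D(0,v) = 0. -/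
open Real Filter

theorem deriv_nonneg_aux (g : ℝ → ℝ) (d v : ℝ) (hv : 0 ≤ v)
    (h : HasDerivWithinAt g d (Set.Ici 0) v) (hg : ∀ t, v ≤ t → g v ≤ g t) : 0 ≤ d := by
  have h1 : HasDerivWithinAt g d (Set.Ioi v) v :=
    h.mono (fun t ht => le_trans hv (le_of_lt ht))
  rw [hasDerivWithinAt_iff_tendsto_slope' (by simp)] at h1
  refine ge_of_tendsto h1 ?_
  filter_upwards [self_mem_nhdsWithin] with t ht
  have ht' : v < t := ht
  rw [slope_def_field]
  exact div_nonneg (by linarith [hg t ht'.le]) (by linarith)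

/-- for a grounded, 2-increasing F on [0,∞)² with uniform margin
F(u,v) → v as u → ∞, the partial derivative D(u,v) = ∂F/∂v (assumed to exist) is,
for every fixed v ≥ 0, nondecreasing in u, takes values in [0,1], and vanishes at u = 0. -/
theorem levy_copula_partial_derivative_basic
    (F D : ℝ → ℝ → ℝ)
    (hground : ∀ u : ℝ, 0 ≤ u → F u 0 = 0 ∧ F 0 u = 0)
    (hincr : ∀ u₁ u₂ v₁ v₂ : ℝ, 0 ≤ u₁ → u₁ ≤ u₂ → 0 ≤ v₁ → v₁ ≤ v₂ →
      0 ≤ F u₂ v₂ - F u₁ v₂ - F u₂ v₁ + F u₁ v₁)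
    (hmargin : ∀ v : ℝ, 0 ≤ v → Tendsto (fun u => F u v) atTop (nhds v))
    (hD : ∀ u v : ℝ, 0 ≤ u → 0 ≤ v →
      HasDerivWithinAt (fun t => F u t) (D u v) (Set.Ici 0) v) :
    ∀ v : ℝ, 0 ≤ v →
      (MonotoneOn (fun u => D u v) (Set.Ici 0)) ∧
      (∀ u : ℝ, 0 ≤ u → 0 ≤ D u v ∧ D u v ≤ 1) ∧
      D 0 v = 0 := by
  intro v hv
  have hmono : MonotoneOn (fun u => D u v) (Set.Ici 0) := by
    intro a ha b hb hab
    have := deriv_nonneg_aux (fun t => F b t - F a t) _ v hv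
      ((hD b v hb hv).sub (hD a v ha hv))
      (fun t ht => by
        have := hincr a b v t ha hab hv ht
        linarith)
    simp only
    linarith
  have hzero : D 0 v = 0 := by
    have h1 := deriv_nonneg_aux (fun t => F 0 t) _ v hv (hD 0 v le_rfl hv)
      (fun t ht => by
        rw [(hground v hv).2, (hground t (hv.trans ht)).2])
    have h2 := deriv_nonneg_aux (fun t => - F 0 t) _ v hv (hD 0 v le_rfl hv).fun_neg
      (fun t ht => by
        rw [(hground v hv).2, (hground t (hv.trans ht)).2])
    linarith
  refine ⟨hmono, fun u hu => ⟨?_, ?_⟩, hzero⟩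
  · have := hmono (Set.mem_Ici.2 le_rfl) (Set.mem_Ici.2 hu) hu
    simp only at this
    linarith
  · have := deriv_nonneg_aux (fun t => t - F u t) _ v hv
      ((hasDerivWithinAt_id v (Set.Ici 0)).fun_sub (hD u v hu hv))
      (fun t ht => by
        have hl : F u t - F u v ≤ t - v := by
          refine ge_of_tendsto ((hmargin t (hv.trans ht)).sub (hmargin v hv)) ?_
          filter_upwards [eventually_ge_atTop u] with w hw
          have := hincr u w v t hu hw hv ht
          linarith
        linarith)
    linarith
end

section
/- Let F : [0,∞)² → [0,∞) satisfy: F(u,0) = F(0,v) = 0 for all u, v ≥ 0; F(u₂,v₂) − F(u₁,v₂) − F(u₂,v₁) + F(u₁,v₁) ≥ 0 whenever u₁ ≤ u₂ and v₁ ≤ v₂; and F(u,v) → v as u → ∞, for every v ≥ 0. Assume that for all u, v ≥ 0 the partial derivative D(u,v) = ∂F(u,v)/∂v exists. Then for Lebesgue-almost every v > 0, lim_{u→∞} D(u,v) = 1. In particular, for every v ≥ 0 at which this limit holds, u ↦ D(u,v) is a distribution function on [0,∞): it is nondecreasing, equals 0 at u = 0, and tends to 1 as u → ∞. -/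
open Real Filter MeasureTheory

/-- for a grounded, 2-increasing F on [0,∞)² with uniform margin
F(u,v) → v as u → ∞ whose partial derivative D = ∂F/∂v exists everywhere, for
Lebesgue-a.e. v > 0 one has D(u,v) → 1 as u → ∞; and for every v ≥ 0 at which this
limit holds, u ↦ D(u,v) is a distribution function on [0,∞). -/
theorem levy_copula_partial_derivative_distribution
    (F D : ℝ → ℝ → ℝ)
    (hground : ∀ u : ℝ, 0 ≤ u → F u 0 = 0 ∧ F 0 u = 0)
    (hincr : ∀ u₁ u₂ v₁ v₂ : ℝ, 0 ≤ u₁ → u₁ ≤ u₂ → 0 ≤ v₁ → v₁ ≤ v₂ →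
      0 ≤ F u₂ v₂ - F u₁ v₂ - F u₂ v₁ + F u₁ v₁)
    (hmargin : ∀ v : ℝ, 0 ≤ v → Tendsto (fun u => F u v) atTop (nhds v))
    (hD : ∀ u v : ℝ, 0 ≤ u → 0 ≤ v →
      HasDerivWithinAt (fun t => F u t) (D u v) (Set.Ici 0) v) :
    (∀ᵐ v ∂(volume.restrict (Set.Ioi (0 : ℝ))),
      Tendsto (fun u => D u v) atTop (nhds 1)) ∧
    (∀ v : ℝ, 0 ≤ v → Tendsto (fun u => D u v) atTop (nhds 1) →
      MonotoneOn (fun u => D u v) (Set.Ici 0) ∧ D 0 v = 0 ∧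
        Tendsto (fun u => D u v) atTop (nhds 1)) := by
  have key : ∀ (f : ℝ → ℝ) (d v : ℝ), 0 ≤ v → MonotoneOn f (Set.Ici 0) →
      HasDerivWithinAt f d (Set.Ici 0) v → 0 ≤ d := by
    intro f d v hv hf h
    have h1 : derivWithin f (Set.Ici 0) v = d :=
      h.derivWithin (uniqueDiffOn_Ici 0 v hv)
    rw [← h1]
    exact hf.derivWithin_nonneg
  have hmono : ∀ v : ℝ, 0 ≤ v → MonotoneOn (fun u => D u v) (Set.Ici 0) := by
    intro v hv u₁ h1 u₂ h2 h12
    have := key (fun t => F u₂ t - F u₁ t) (D u₂ v - D u₁ v) v hv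
      (by
        intro a ha b hb hab
        have := hincr u₁ u₂ a b h1 h12 ha hab
        simp only
        linarith)
      ((hD u₂ v h2 hv).sub (hD u₁ v h1 hv))
    simp only
    linarith
  have hzero : ∀ v : ℝ, 0 ≤ v → D 0 v = 0 := by
    intro v hv
    have h1 := hD 0 v le_rfl hv
    have h2 : HasDerivWithinAt (fun t => F 0 t) 0 (Set.Ici 0) v :=
      (hasDerivWithinAt_const v (Set.Ici 0) (0 : ℝ)).congr
        (fun t ht => (hground t ht).2) (hground v hv).2
    exact (uniqueDiffOn_Ici (0 : ℝ) v hv).eq_deriv _ h1 h2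
  have hle : ∀ u v : ℝ, 0 ≤ u → 0 ≤ v → D u v ≤ 1 := by
    intro u v hu hv
    have := key (fun t => t - F u t) (1 - D u v) v hv
      (by
        intro a ha b hb hab
        have hlim := (((hmargin b hb).sub_const (F u b)).sub (hmargin a ha)).add_const (F u a)
        have h0 : 0 ≤ b - F u b - a + F u a := by
          refine ge_of_tendsto hlim ?_
          filter_upwards [eventually_ge_atTop u] with w hw
          exact hincr u w a b hu hw ha hab
        simp only
        linarith)
      ((hasDerivWithinAt_id v _).sub (hD u v hu hv))
    linarith
  have hnn : ∀ u v : ℝ, 0 ≤ u → 0 ≤ v → 0 ≤ D u v := by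
    intro u v hu hv
    have := hmono v hv (Set.mem_Ici.2 le_rfl) (Set.mem_Ici.2 hu) hu
    simp only [hzero v hv] at this
    exact this
  refine ⟨?_, fun v hv h => ⟨hmono v hv, hzero v hv, h⟩⟩
  have hcont : ∀ u b : ℝ, 0 ≤ u → ContinuousOn (fun t => F u t) (Set.Icc 0 b) := by
    intro u b hu t ht
    exact (hD u t hu ht.1).continuousWithinAt.mono Set.Icc_subset_Ici_self
  have hder : ∀ u b : ℝ, 0 ≤ u → ∀ t ∈ Set.Ioo 0 b, HasDerivAt (fun t => F u t) (D u t) t := by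
    intro u b hu t ht
    exact (hD u t hu ht.1.le).hasDerivAt (Ici_mem_nhds ht.1)
  have hint : ∀ u b : ℝ, 0 ≤ u → 0 ≤ b → IntegrableOn (D u) (Set.Ioc 0 b) := by
    intro u b hu hb
    exact intervalIntegral.integrableOn_deriv_of_nonneg (hcont u b hu) (hder u b hu)
      (fun t ht => hnn u t hu ht.1.le)
  have hval : ∀ u b : ℝ, 0 ≤ u → 0 ≤ b → ∫ t in Set.Ioc 0 b, D u t = F u b := by
    intro u b hu hb
    rw [← intervalIntegral.integral_of_le hb,
      intervalIntegral.integral_eq_sub_of_hasDerivAt_of_le hb (hcont u b hu) (hder u b hu)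
        ((intervalIntegrable_iff_integrableOn_Ioc_of_le hb).2 (hint u b hu hb)),
      (hground u hu).1, sub_zero]
  have hseq : ∀ b : ℕ, ∀ᵐ v ∂(volume.restrict (Set.Ioc (0 : ℝ) b)),
      Tendsto (fun n : ℕ => D n v) atTop (nhds 1) := by
    intro b
    have hb : (0 : ℝ) ≤ b := b.cast_nonneg
    refine tendsto_of_integral_tendsto_of_monotone (F := fun _ => (1 : ℝ))
      (fun n => hint n b n.cast_nonneg hb) (integrable_const _) ?_ ?_ ?_
    · have h1 : ∫ _ in Set.Ioc (0 : ℝ) b, (1 : ℝ) = b := by simp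
      rw [h1]
      simp_rw [fun n : ℕ => hval n b n.cast_nonneg hb]
      exact (hmargin b hb).comp tendsto_natCast_atTop_atTop
    · filter_upwards [ae_restrict_mem measurableSet_Ioc] with v hv n m hnm
      exact hmono v hv.1.le (Set.mem_Ici.2 n.cast_nonneg) (Set.mem_Ici.2 m.cast_nonneg)
        (Nat.cast_le.2 hnm)
    · filter_upwards [ae_restrict_mem measurableSet_Ioc] with v hv n
      exact hle n v n.cast_nonneg hv.1.le
  have hall : ∀ᵐ v : ℝ, ∀ b : ℕ, v ∈ Set.Ioc (0 : ℝ) b →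
      Tendsto (fun n : ℕ => D n v) atTop (nhds 1) :=
    ae_all_iff.2 fun b => (ae_restrict_iff' measurableSet_Ioc).1 (hseq b)
  rw [ae_restrict_iff' measurableSet_Ioi]
  filter_upwards [hall] with v hv hv0
  obtain ⟨b, hb⟩ := exists_nat_ge v
  have ht := hv b ⟨hv0, hb⟩
  have hv0' : (0 : ℝ) ≤ v := le_of_lt hv0
  refine tendsto_order.2 ⟨fun a ha => ?_, fun a ha => ?_⟩
  · obtain ⟨n, hn⟩ := ((tendsto_order.1 ht).1 a ha).exists
    filter_upwards [eventually_ge_atTop (n : ℝ)] with u hu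
    exact hn.trans_le (hmono v hv0' (Set.mem_Ici.2 n.cast_nonneg)
      (Set.mem_Ici.2 (n.cast_nonneg.trans hu)) hu)
  · filter_upwards [eventually_ge_atTop (0 : ℝ)] with u hu
    exact (hle u v hu hv0').trans_lt ha
end

section
/- Let d ≥ 2 and let F : [0,∞)^d → [0,∞) be d-increasing, i.e. for every rectangle (a,b] = (a₁,b₁] × … × (a_d,b_d] ⊆ [0,∞)^d the F-volume V_F((a,b]) = Σ_{c ∈ vertices} (−1)^{N(c)} F(c) is nonnegative, where the sum runs over the 2^d vertices c of the rectangle and N(c) is the number of indices k with c_k = a_k. Assume that the partial derivative ∂F/∂u_d exists everywhere on [0,∞)^d. Then for every fixed v ≥ 0, the function G_v(u₁,…,u_{d−1}) = (∂F/∂u_d)(u₁,…,u_{d−1},v) is (d−1)-increasing on [0,∞)^{d−1}: the G_v-volume of every rectangle in [0,∞)^{d−1} is nonnegative. -/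
open Real Finset

/-- The F-volume of the rectangle (a, b] ⊆ ℝ^n: the alternating sum
Σ_c (−1)^{N(c)} F(c) over the 2^n vertices c of the rectangle, N(c) being the number of
coordinates where c picks the lower endpoint a. -/
noncomputable def rectVolume (n : ℕ) (F : (Fin n → ℝ) → ℝ) (a b : Fin n → ℝ) : ℝ :=
  ∑ s : Finset (Fin n), (-1 : ℝ) ^ s.card * F (fun k => if k ∈ s then a k else b k)

theorem rectVolume_succ (m : ℕ) (F : (Fin (m + 1) → ℝ) → ℝ) (a b : Fin m → ℝ) (s t : ℝ) :
    rectVolume (m + 1) F (Fin.snoc a s) (Fin.snoc b t) =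
      rectVolume m (fun y => F (Fin.snoc y t)) a b
        - rectVolume m (fun y => F (Fin.snoc y s)) a b := by
  unfold rectVolume
  have hu : (Finset.univ : Finset (Finset (Fin (m + 1)))) =
      (insert (Fin.last m) (Finset.univ.map Fin.castSuccEmb)).powerset := by
    rw [Eq.comm, Finset.eq_univ_iff_forall]
    intro x
    rw [Finset.mem_powerset]
    intro k _
    induction k using Fin.lastCases <;> simp
  have key : ∀ g : Finset (Fin (m + 1)) → ℝ,
      ∑ x ∈ (Finset.univ.map (Fin.castSuccEmb (n := m))).powerset, g x =
        ∑ x : Finset (Fin m), g (x.map Fin.castSuccEmb) := by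
    intro g
    symm
    refine Finset.sum_bij (fun x _ => x.map Fin.castSuccEmb) ?_ ?_ ?_ ?_
    · intro x _
      rw [Finset.mem_powerset]
      exact Finset.map_subset_map.2 (Finset.subset_univ x)
    · intro x _ y _ h
      exact Finset.map_injective _ h
    · intro y hy
      rw [Finset.mem_powerset, Finset.subset_map_iff] at hy
      obtain ⟨x, _, rfl⟩ := hy
      exact ⟨x, Finset.mem_univ _, rfl⟩
    · intros
      rfl
  rw [hu, Finset.sum_powerset_insert (by simp), key, key, sub_eq_add_neg, ← Finset.sum_neg_distrib]
  congr 1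
  · refine Finset.sum_congr rfl fun x _ => ?_
    rw [Finset.card_map]
    congr 2
    ext k
    induction k using Fin.lastCases <;> simp
  · refine Finset.sum_congr rfl fun x _ => ?_
    rw [Finset.card_insert_of_notMem (by simp), Finset.card_map, pow_succ]
    have : (fun k => if k ∈ insert (Fin.last m) (x.map Fin.castSuccEmb) then
        (Fin.snoc a s : Fin (m + 1) → ℝ) k else (Fin.snoc b t : Fin (m + 1) → ℝ) k) =
        (Fin.snoc (fun k => if k ∈ x then a k else b k) s : Fin (m + 1) → ℝ) := by
      ext k
      induction k using Fin.lastCases <;> simp [Fin.castSucc_ne_last]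
    rw [this]
    ring

/-- if F : [0,∞)^d → [0,∞) is d-increasing (d = m+1 ≥ 2) and its partial
derivative in the last coordinate exists everywhere on [0,∞)^d, then for every fixed v ≥ 0
the function G_v(u₁,…,u_{d-1}) = ∂F/∂u_d(u₁,…,u_{d-1},v) is (d−1)-increasing. -/
theorem d_increasing_partial_derivative
    (m : ℕ) (hm : 1 ≤ m)
    (F : (Fin (m + 1) → ℝ) → ℝ)
    (hFnonneg : ∀ x : Fin (m + 1) → ℝ, (∀ k, 0 ≤ x k) → 0 ≤ F x)
    (hincr : ∀ a b : Fin (m + 1) → ℝ, (∀ k, 0 ≤ a k) → (∀ k, a k ≤ b k) →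
      0 ≤ rectVolume (m + 1) F a b)
    (D : (Fin (m + 1) → ℝ) → ℝ)
    (hD : ∀ x : Fin (m + 1) → ℝ, (∀ k, 0 ≤ x k) →
      HasDerivWithinAt (fun t => F (Function.update x (Fin.last m) t)) (D x)
        (Set.Ici 0) (x (Fin.last m))) :
    ∀ v : ℝ, 0 ≤ v →
      ∀ a b : Fin m → ℝ, (∀ k, 0 ≤ a k) → (∀ k, a k ≤ b k) →
        0 ≤ rectVolume m (fun y => D (Fin.snoc y v)) a b := by
  intro v hv a b ha hab
  have hsn : ∀ (y : Fin m → ℝ) (t : ℝ), (∀ k, 0 ≤ y k) → 0 ≤ t →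
      ∀ k, 0 ≤ (Fin.snoc y t : Fin (m + 1) → ℝ) k := by
    intro y t hy ht k
    induction k using Fin.lastCases <;> simp [hy, ht]
  have hmono : MonotoneOn (fun t => rectVolume m (fun y => F (Fin.snoc y t)) a b)
      (Set.Ici 0) := by
    intro s hs t ht hst
    have h := hincr (Fin.snoc a s) (Fin.snoc b t) (hsn a s ha hs) (by
      intro k
      induction k using Fin.lastCases <;> simp [hab, hst])
    rw [rectVolume_succ] at h
    exact sub_nonneg.1 h
  have hder : HasDerivWithinAt (fun t => rectVolume m (fun y => F (Fin.snoc y t)) a b)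
      (rectVolume m (fun y => D (Fin.snoc y v)) a b) (Set.Ici 0) v := by
    unfold rectVolume
    refine HasDerivWithinAt.fun_sum fun x _ => HasDerivWithinAt.const_mul _ ?_
    have h := hD (Fin.snoc (fun k => if k ∈ x then a k else b k) v)
      (hsn _ v (fun k => by
        by_cases hk : k ∈ x
        · simp [hk, ha]
        · simpa [hk] using (ha k).trans (hab k)) hv)
    simpa only [Fin.update_snoc_last, Fin.snoc_last] using h
  rw [← hder.derivWithin (uniqueDiffOn_Ici 0 v hv)]
  exact hmono.derivWithin_nonneg
end
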